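/- arXiv:2502.09958 — 3 statements merged into one kernel-verified Lean document; each statement's English description precedes it below -/
import Mathlib

section
/- The genus of the 2-sphere S² = {x ∈ ℝ³ : ‖x‖ = 1} is 0; that is, for every subset C ⊆ S² homeomorphic to the circle S¹, the complement S² \ C is disconnected. -/
/-- The genus of a topological space `X`: the supremum of the numbers `m` for which there exist
`m` pairwise disjoint subsets of `X`, each homeomorphic to the circle `S¹`, whose union has
connected complement. -/
noncomputable def genus (X : Type*) [TopologicalSpace X] : ℕ :=
  sSup {m : ℕ | ∃ C : Fin m → Set X,
    (Pairwise fun i j => Disjoint (C i) (C j)) ∧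
    (∀ i, Nonempty (↥(C i) ≃ₜ ↥(Metric.sphere (0 : EuclideanSpace ℝ (Fin 2)) 1))) ∧
    IsConnected (⋃ i, C i)ᶜ}

/-!
Cut a closed curve `C ⊆ S²` at two points `q ≠ p` into arcs `A` and `B`, and use stereographic
projection from `q` to view `S² \ {q}` as `ℂ`. Moving `w` along `A` from `q = ∞` to `p` deforms the
constant `1` to a multiple of `z - p` through functions of `z` which do not vanish off `A`, so
`z - p` has a continuous logarithm off `A`, and likewise off `B`. If the complement of `C = A ∪ B`
were connected, the two logarithms would differ there by a constant and hence could be glued to a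
logarithm of `z - p` on `ℂ \ {p}`, which does not exist. A closed set disjoint from `C` can be added
to `B`, so the argument also covers several disjoint curves.
-/

open Set Topology unitInterval Metric
open scoped OnePoint

section ContinuousLog

variable {X : Type*} [TopologicalSpace X] {f : X → ℂ} {s t : Set X}

/-- `f` has a continuous logarithm on `s`; in particular it does not vanish there. The logarithm is
a function on all of `X` whose values off `s` are irrelevant. -/
def HasContinuousLogOn (f : X → ℂ) (s : Set X) : Prop :=
  ∃ g : X → ℂ, ContinuousOn g s ∧ ∀ x ∈ s, Complex.exp (g x) = f x

theorem eqOn_of_exp_eq {g₁ g₂ : X → ℂ} (hs : IsPreconnected s) (h₁ : ContinuousOn g₁ s)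
    (h₂ : ContinuousOn g₂ s) (hexp : ∀ x ∈ s, Complex.exp (g₁ x) = Complex.exp (g₂ x)) {x₀ : X}
    (hx₀ : x₀ ∈ s) (h₀ : g₁ x₀ = g₂ x₀) : EqOn g₁ g₂ s :=
  Complex.isCoveringMap_exp.eqOn_of_comp_eqOn hs h₁ h₂
    (fun x hx => Subtype.ext (hexp x hx)) hx₀ h₀

namespace HasContinuousLogOn

theorem mono (hf : HasContinuousLogOn f t) (hst : s ⊆ t) : HasContinuousLogOn f s :=
  let ⟨g, hg, hexp⟩ := hf
  ⟨g, hg.mono hst, fun x hx => hexp x (hst hx)⟩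

theorem const_mul (hf : HasContinuousLogOn f s) {c : ℂ} (hc : c ≠ 0) :
    HasContinuousLogOn (fun x => c * f x) s := by
  obtain ⟨g, hg, hexp⟩ := hf
  refine ⟨fun x => Complex.log c + g x, continuousOn_const.add hg, fun x hx => ?_⟩
  rw [Complex.exp_add, Complex.exp_log hc, hexp x hx]

theorem of_homotopy {H : I × X → ℂ} (hH : ContinuousOn H (univ ×ˢ s))
    (hne : ∀ τ, ∀ x ∈ s, H (τ, x) ≠ 0) (h₀ : HasContinuousLogOn (fun x => H (0, x)) s) :
    HasContinuousLogOn (fun x => H (1, x)) s := by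
  obtain ⟨g, hg, hexp⟩ := h₀
  let K : C(I × s, {z : ℂ // z ≠ 0}) :=
    ⟨fun y => ⟨H (y.1, y.2), hne y.1 y.2 y.2.2⟩,
      (hH.comp_continuous (f := fun y : I × s => (y.1, (y.2 : X))) (by fun_prop)
        fun y => ⟨mem_univ _, y.2.2⟩).subtype_mk _⟩
  let g₀ : C(s, ℂ) := ⟨s.domRestrict g, hg.domRestrict⟩
  have hK₀ : ∀ x, K (0, x) = ⟨Complex.exp (g₀ x), Complex.exp_ne_zero _⟩ :=
    fun x => Subtype.ext (hexp x x.2).symm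
  let L := Complex.isCoveringMap_exp.liftHomotopy K g₀ hK₀
  have hL : ∀ y, Complex.exp (L y) = K y := fun y =>
    congrArg Subtype.val (congrFun (Complex.isCoveringMap_exp.liftHomotopy_lifts K g₀ hK₀) y)
  let g₁ : X → ℂ := Function.extend Subtype.val (fun x : s => L (1, x)) 0
  have hg₁ : ∀ x : s, g₁ x = L (1, x) := Subtype.val_injective.extend_apply _ _
  refine ⟨g₁, continuousOn_iff_continuous_domRestrict.mpr
    ((by fun_prop : Continuous fun x : s => L (1, x)).congr fun x => (hg₁ x).symm),
    fun x hx => ?_⟩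
  exact hg₁ ⟨x, hx⟩ ▸ hL (1, ⟨x, hx⟩)

theorem union (hs : IsOpen s) (ht : IsOpen t) (hst : IsPreconnected (s ∩ t))
    (hfs : HasContinuousLogOn f s) (hft : HasContinuousLogOn f t) :
    HasContinuousLogOn f (s ∪ t) := by
  classical
  obtain ⟨g, hg, hgf⟩ := hfs
  obtain ⟨k, hk, hkf, hgk⟩ : ∃ k : X → ℂ, ContinuousOn k t ∧
      (∀ x ∈ t, Complex.exp (k x) = f x) ∧ EqOn g k (s ∩ t) := by
    obtain ⟨k, hk, hkf⟩ := hft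
    rcases (s ∩ t).eq_empty_or_nonempty with hempty | ⟨x₀, hx₀⟩
    · exact ⟨k, hk, hkf, by simp [hempty]⟩
    have hshift : ContinuousOn (fun x => k x + (g x₀ - k x₀)) t := hk.add continuousOn_const
    have hshift_exp : ∀ x ∈ t, Complex.exp (k x + (g x₀ - k x₀)) = f x := fun x hx => by
      rw [Complex.exp_add, Complex.exp_sub, hgf x₀ hx₀.1, ← hkf x₀ hx₀.2,
        div_self (Complex.exp_ne_zero _), mul_one, hkf x hx]
    refine ⟨_, hshift, hshift_exp, eqOn_of_exp_eq hst (hg.mono inter_subset_left)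
      (hshift.mono inter_subset_right) (fun x hx => ?_) hx₀ (by ring)⟩
    rw [hgf x hx.1, hshift_exp x hx.2]
  have hpiece_s : EqOn (s.piecewise g k) g s := piecewise_eqOn s g k
  have hpiece_t : EqOn (s.piecewise g k) k t := fun x hxt => by
    by_cases hxs : x ∈ s
    · rw [hpiece_s hxs, hgk ⟨hxs, hxt⟩]
    · exact piecewise_eq_of_notMem s g k hxs
  refine ⟨s.piecewise g k,
    (hg.congr hpiece_s).union_of_isOpen (hk.congr hpiece_t) hs ht, ?_⟩
  rintro x (hx | hx)
  · rw [hpiece_s hx, hgf x hx]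
  · rw [hpiece_t hx, hkf x hx]

end HasContinuousLogOn

theorem not_hasContinuousLogOn_sub_const (p : ℂ) :
    ¬ HasContinuousLogOn (fun z => z - p) {p}ᶜ := by
  intro h
  obtain ⟨g, hg, hexp⟩ := h
  have hne : ∀ w, p + Complex.exp w ∈ ({p}ᶜ : Set ℂ) := fun w => by simp
  have hlift : EqOn (fun w => g (p + Complex.exp w)) (fun w => w + g (p + 1)) univ :=
    eqOn_of_exp_eq isPreconnected_univ (hg.comp (by fun_prop) fun w _ => hne w) (by fun_prop)
      (fun w _ => by
        have h₁ : Complex.exp (g (p + 1)) = 1 := by simpa using hexp (p + 1) (by simp)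
        rw [hexp _ (hne w), Complex.exp_add, h₁, mul_one]
        exact add_sub_cancel_left _ _)
      (mem_univ 0) (by simp)
  simpa using hlift (mem_univ (2 * Real.pi * Complex.I))

end ContinuousLog

section RiemannSphere

/-- The function `w ↦ 1 / (w - c)` on the Riemann sphere, with value `0` at `∞`; the value at the
pole `c` is the junk value `0`. -/
noncomputable def onePointInvSub (c : ℂ) (w : OnePoint ℂ) : ℂ :=
  w.elim 0 fun z => (z - c)⁻¹

@[simp]
theorem onePointInvSub_infty (c : ℂ) : onePointInvSub c ∞ = 0 := rfl

@[simp]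
theorem onePointInvSub_coe (c z : ℂ) : onePointInvSub c z = (z - c)⁻¹ := rfl

theorem continuousAt_onePointInvSub {c : ℂ} {w : OnePoint ℂ} (hw : w ≠ c) :
    ContinuousAt (onePointInvSub c) w := by
  induction w with
  | infty =>
    rw [OnePoint.continuousAt_infty', Filter.coclosedCompact_eq_cocompact,
      ← Metric.cobounded_eq_cocompact]
    exact Filter.tendsto_inv₀_cobounded.comp (tendsto_sub_const_cobounded c)
  | coe z =>
    have hz : z - c ≠ 0 := sub_ne_zero.mpr fun h => hw (congrArg _ h)
    exact OnePoint.continuousAt_coe.mpr ((by fun_prop : ContinuousAt (· - c) z).inv₀ hz)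

theorem one_sub_mul_onePointInvSub_ne_zero {c z : ℂ} {w : OnePoint ℂ} (hwc : w ≠ c)
    (hwz : w ≠ z) : 1 - (z - c) * onePointInvSub c w ≠ 0 := by
  induction w with
  | infty => simp
  | coe w =>
    have hc : w - c ≠ 0 := sub_ne_zero.mpr fun h => hwc (congrArg _ h)
    have hz : w - z ≠ 0 := sub_ne_zero.mpr fun h => hwz (congrArg _ h)
    have hratio : 1 - (z - c) * onePointInvSub c w = (w - z) / (w - c) := by
      rw [onePointInvSub_coe]
      field_simp
      ring
    exact hratio ▸ div_ne_zero hz hc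

theorem hasContinuousLogOn_sub_of_joinedIn_infty {A : Set (OnePoint ℂ)} {p : ℂ}
    (hA : JoinedIn A ∞ p) : HasContinuousLogOn (fun z => z - p) ((↑) ⁻¹' Aᶜ) := by
  obtain hempty | ⟨c, hc⟩ := ((↑) ⁻¹' Aᶜ : Set ℂ).eq_empty_or_nonempty
  · exact ⟨0, continuousOn_const, by simp [hempty]⟩
  obtain ⟨γ, hγ⟩ := hA
  have hγ_ne : ∀ τ, ∀ z ∈ ((↑) ⁻¹' Aᶜ : Set ℂ), γ τ ≠ z := fun τ z hz h => hz (h ▸ hγ τ)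
  have hpc : p - c ≠ 0 := sub_ne_zero.mpr fun h => hc (h ▸ γ.target ▸ hγ 1)
  let ρ : I → ℂ := fun τ => onePointInvSub c (γ τ)
  let H : I × ℂ → ℂ := fun x => 1 - (x.2 - c) * ρ x.1
  have hρ : Continuous ρ := continuous_iff_continuousAt.mpr fun τ =>
    (continuousAt_onePointInvSub (hγ_ne τ c hc)).comp γ.continuous.continuousAt
  have hH : Continuous H := by fun_prop
  have hH₁ : HasContinuousLogOn (fun z => H (1, z)) ((↑) ⁻¹' Aᶜ) :=
    .of_homotopy hH.continuousOn
      (fun τ z hz => one_sub_mul_onePointInvSub_ne_zero (hγ_ne τ c hc) (hγ_ne τ z hz))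
      ⟨0, continuousOn_const, by simp [H, ρ]⟩
  convert hH₁.const_mul (neg_ne_zero.mpr hpc) using 2 with z
  simp only [H, ρ, γ.target, onePointInvSub_coe]
  field_simp
  ring

theorem not_isPreconnected_compl_union_of_joinedIn_infty {A B : Set (OnePoint ℂ)} {p : ℂ}
    (hA : IsClosed A) (hB : IsClosed B) (hAB : A ∩ B ⊆ {∞, ↑p}) (hpA : JoinedIn A ∞ p)
    (hpB : JoinedIn B ∞ p) : ¬ IsPreconnected (A ∪ B)ᶜ := by
  intro hconn
  let U : Set ℂ := (↑) ⁻¹' Aᶜ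
  let V : Set ℂ := (↑) ⁻¹' Bᶜ
  have hU : IsOpen U := hA.isOpen_compl.preimage OnePoint.continuous_coe
  have hV : IsOpen V := hB.isOpen_compl.preimage OnePoint.continuous_coe
  have hUV : IsPreconnected (U ∩ V) := by
    have hinfty : (∞ : OnePoint ℂ) ∉ (A ∪ B)ᶜ := not_not_intro (.inl hpA.source_mem)
    have hrange : (A ∪ B)ᶜ ⊆ range ((↑) : ℂ → OnePoint ℂ) := by
      rw [← OnePoint.compl_infty]
      exact subset_compl_singleton_iff.mpr hinfty
    rw [← preimage_inter, ← compl_union]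
    exact hconn.preimage_of_isOpenMap OnePoint.coe_injective
      OnePoint.isOpenEmbedding_coe.isOpenMap hrange
  have hcover : {p}ᶜ ⊆ U ∪ V := by
    rw [← preimage_union, ← compl_inter, preimage_compl, compl_subset_compl]
    intro z hz
    simpa using hAB hz
  exact not_hasContinuousLogOn_sub_const p
    ((HasContinuousLogOn.union hU hV hUV (hasContinuousLogOn_sub_of_joinedIn_infty hpA)
      (hasContinuousLogOn_sub_of_joinedIn_infty hpB)).mono hcover)

end RiemannSphere

section Sphere

variable {E : Type*} [NormedAddCommGroup E] [InnerProductSpace ℝ E]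
  [hE : Fact (Module.finrank ℝ E = 3)]

theorem exists_homeomorph_onePoint_complex_sphere (q : sphere (0 : E) 1) :
    ∃ e : OnePoint ℂ ≃ₜ sphere (0 : E) 1, e ∞ = q := by
  have : FiniteDimensional ℝ E := .of_finrank_eq_succ hE.out
  have hfinrank : Module.finrank ℝ ℂ = Module.finrank ℝ (ℝ ∙ (q : E))ᗮ := by
    rw [Complex.finrank_real_complex,
      Submodule.finrank_orthogonal_span_singleton (n := 2) (ne_zero_of_mem_unit_sphere q)]
  obtain ⟨L⟩ := FiniteDimensional.nonempty_continuousLinearEquiv_of_finrank_eq hfinrank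
  exact ⟨L.toHomeomorph.onePointCongr.trans
    (onePointHyperplaneHomeoUnitSphere (norm_eq_of_mem_sphere q)), rfl⟩

theorem not_isPreconnected_compl_union_of_joinedIn {A B : Set (sphere (0 : E) 1)}
    {q p : sphere (0 : E) 1} (hA : IsClosed A) (hB : IsClosed B) (hqp : q ≠ p)
    (hAB : A ∩ B ⊆ {q, p}) (hpA : JoinedIn A q p) (hpB : JoinedIn B q p) :
    ¬ IsPreconnected (A ∪ B)ᶜ := by
  obtain ⟨e, rfl⟩ := exists_homeomorph_onePoint_complex_sphere q
  obtain ⟨p, rfl⟩ := e.surjective p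
  obtain ⟨p, rfl⟩ := OnePoint.ne_infty_iff_exists.mp fun h => hqp (congrArg e h.symm)
  have hjoined : ∀ {S}, JoinedIn S (e ∞) (e p) → JoinedIn (e ⁻¹' S) ∞ p := fun h => by
    simpa [← e.image_symm] using h.map e.symm.continuous
  have hinter : e ⁻¹' A ∩ e ⁻¹' B ⊆ {∞, ↑p} := fun z hz => by
    simpa [e.injective.eq_iff] using hAB hz
  rw [← e.isPreconnected_preimage, preimage_compl, preimage_union]
  exact not_isPreconnected_compl_union_of_joinedIn_infty (hA.preimage e.continuous)
    (hB.preimage e.continuous) hinter (hjoined hpA) (hjoined hpB)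

end Sphere

section Circle

theorem cos_sin_mem_sphere (θ : ℝ) :
    !₂[Real.cos θ, Real.sin θ] ∈ sphere (0 : EuclideanSpace ℝ (Fin 2)) 1 := by
  rw [EuclideanSpace.sphere_zero_eq _ zero_le_one]
  simp [Fin.sum_univ_two]

theorem eq_or_eq_neg_of_snd_eq_zero {z w : sphere (0 : EuclideanSpace ℝ (Fin 2)) 1}
    (hz : z.1 1 = 0) (hw : w.1 1 = 0) : z = w ∨ z = -w := by
  have hsq : ∀ v : sphere (0 : EuclideanSpace ℝ (Fin 2)) 1, v.1 1 = 0 → v.1 0 ^ 2 = 1 :=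
    fun v hv => by simpa [Fin.sum_univ_two, hv] using (EuclideanSpace.real_norm_sq_eq v.1).symm
  refine (sq_eq_sq_iff_eq_or_eq_neg.mp ((hsq z hz).trans (hsq w hw).symm)).imp
    (fun h => ?_) fun h => ?_ <;>
  · ext i
    fin_cases i <;> simp [h, hz, hw]

theorem exists_isClosed_joinedIn_cover_circle :
    ∃ (A B : Set (sphere (0 : EuclideanSpace ℝ (Fin 2)) 1)) (q p : _), IsClosed A ∧ IsClosed B ∧
      A ∪ B = univ ∧ q ≠ p ∧ A ∩ B ⊆ {q, p} ∧ JoinedIn A q p ∧ JoinedIn B q p := by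
  let A : Set (sphere (0 : EuclideanSpace ℝ (Fin 2)) 1) := {z | 0 ≤ z.1 1}
  let c : ℝ → sphere (0 : EuclideanSpace ℝ (Fin 2)) 1 := fun t =>
    ⟨!₂[Real.cos (Real.pi * t), Real.sin (Real.pi * t)], cos_sin_mem_sphere _⟩
  have hc_one : c 1 = -c 0 := by
    ext i
    fin_cases i <;> simp [c]
  have hA : JoinedIn A (c 0) (-c 0) := by
    refine .ofLine (f := c) (by fun_prop) rfl hc_one ?_
    rintro _ ⟨t, ht, rfl⟩
    exact Real.sin_nonneg_of_nonneg_of_le_pi (mul_nonneg Real.pi_pos.le ht.1)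
      (mul_le_of_le_one_right Real.pi_pos.le ht.2)
  have hB : JoinedIn (-A) (c 0) (-c 0) := by
    simpa using (hA.map (f := fun z => -z) continuous_neg).symm
  have hA_closed : IsClosed A := isClosed_le (by fun_prop) (by fun_prop)
  have hneg : ∀ z, z ∈ -A ↔ z.1 1 ≤ 0 := fun z => neg_nonneg (a := z.1 1)
  refine ⟨A, -A, c 0, -c 0, hA_closed, hA_closed.preimage continuous_neg,
    eq_univ_of_forall fun z => (le_total 0 (z.1 1)).imp_right (hneg z).mpr,
    ne_neg_of_mem_unit_sphere ℝ _, ?_, hA, hB⟩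
  rintro z ⟨hz_nonneg, hz_nonpos⟩
  exact eq_or_eq_neg_of_snd_eq_zero (((hneg z).mp hz_nonpos).antisymm hz_nonneg) (by simp [c])

end Circle

section SphereCurves

variable {E : Type*} [NormedAddCommGroup E] [InnerProductSpace ℝ E]
  [Fact (Module.finrank ℝ E = 3)]

theorem not_isPreconnected_compl_range_union
    {j : sphere (0 : EuclideanSpace ℝ (Fin 2)) 1 → sphere (0 : E) 1} (hj : Continuous j)
    (hj_inj : Function.Injective j) {D : Set (sphere (0 : E) 1)} (hD : IsClosed D)
    (hjD : Disjoint (range j) D) : ¬ IsPreconnected (range j ∪ D)ᶜ := by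
  obtain ⟨A, B, q, p, hA, hB, hAB_univ, hqp, hAB, hpA, hpB⟩ :=
    exists_isClosed_joinedIn_cover_circle
  rw [← image_univ, ← hAB_univ, image_union, union_assoc]
  have himage_closed : ∀ {S}, IsClosed S → IsClosed (j '' S) := fun hS =>
    (hS.isCompact.image hj).isClosed
  refine not_isPreconnected_compl_union_of_joinedIn (himage_closed hA)
    ((himage_closed hB).union hD) (hj_inj.ne hqp) ?_ (hpA.map hj)
    ((hpB.map hj).mono subset_union_left)
  rw [inter_union_distrib_left, ← image_inter hj_inj,
    (hjD.mono_left (image_subset_range j A)).inter_eq, union_empty, ← image_pair]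
  exact image_mono hAB

theorem not_isPreconnected_compl_iUnion_circles {ι : Type*} [Finite ι] [Nonempty ι]
    {C : ι → Set (sphere (0 : E) 1)} (hdisj : Pairwise fun i j => Disjoint (C i) (C j))
    (hC : ∀ i, Nonempty (C i ≃ₜ sphere (0 : EuclideanSpace ℝ (Fin 2)) 1)) :
    ¬ IsPreconnected (⋃ i, C i)ᶜ := by
  obtain ⟨i₀⟩ := ‹Nonempty ι›
  have hclosed : ∀ i, IsClosed (C i) := fun i => by
    obtain ⟨e⟩ := hC i
    have : CompactSpace (C i) := e.symm.compactSpace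
    exact (isCompact_iff_compactSpace.mpr this).isClosed
  obtain ⟨e⟩ := hC i₀
  have hrange : range (Subtype.val ∘ e.symm) = C i₀ := by
    rw [e.symm.surjective.range_comp, Subtype.range_coe]
  have hsplit : ⋃ i, C i = C i₀ ∪ ⋃ (i) (_ : i ≠ i₀), C i := iSup_split_single C i₀
  rw [hsplit, ← hrange]
  refine not_isPreconnected_compl_range_union (by fun_prop)
    (Subtype.val_injective.comp e.symm.injective)
    (isClosed_iUnion_of_finite fun i => isClosed_iUnion_of_finite fun _ => hclosed i) ?_
  simp only [hrange, disjoint_iUnion_right]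
  exact fun i hi => hdisj hi.symm

theorem genus_sphere_eq_zero_general :
    genus (sphere (0 : E) 1) = 0 ∧
    ∀ C : Set (sphere (0 : E) 1),
      Nonempty (C ≃ₜ sphere (0 : EuclideanSpace ℝ (Fin 2)) 1) → ¬ IsPreconnected Cᶜ := by
  constructor
  · refine Nat.le_zero.mp (csSup_le' ?_)
    rintro m ⟨C, hdisj, hC, hconn⟩
    by_contra! hm
    have : Nonempty (Fin m) := Fin.pos_iff_nonempty.mp hm
    exact not_isPreconnected_compl_iUnion_circles hdisj hC hconn.isPreconnected
  · intro C hC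
    simpa only [iUnion_const] using not_isPreconnected_compl_iUnion_circles (ι := Unit)
      (C := fun _ => C) (fun i j hij => (hij (Subsingleton.elim i j)).elim)
      fun _ => hC

end SphereCurves

/-- the genus of the 2-sphere `S²` is `0`; every subset of `S²` homeomorphic to the
circle `S¹` has disconnected complement. -/
theorem genus_sphere_eq_zero :
    genus ↥(Metric.sphere (0 : EuclideanSpace ℝ (Fin 3)) 1) = 0 ∧
    ∀ C : Set ↥(Metric.sphere (0 : EuclideanSpace ℝ (Fin 3)) 1),
      Nonempty (↥C ≃ₜ ↥(Metric.sphere (0 : EuclideanSpace ℝ (Fin 2)) 1)) →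
      ¬ IsPreconnected Cᶜ := by
  have : Fact (Module.finrank ℝ (EuclideanSpace ℝ (Fin 3)) = 3) := ⟨by simp⟩
  exact genus_sphere_eq_zero_general
end

section
/- The genus of the torus T² = (ℝ/ℤ) × (ℝ/ℤ) is 1; that is, there exists a subset C ⊆ T² homeomorphic to the circle S¹ with T² \ C connected, and for any two disjoint subsets C₁, C₂ ⊆ T² each homeomorphic to S¹, the complement T² \ (C₁ ∪ C₂) is disconnected. -/
/-! A quotient of translates of a topological theta function, made `ℤ²`-periodic by an exponential
factor, is a *dipole* on the torus: a function with one simple zero and one simple pole, at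
arbitrary prescribed points. Cut a simple closed curve `C` into two arcs with common endpoints `p`
and `q`, and let `f` be the dipole with zero `p` and pole `q`. Sliding `p` to `q` along the first
arc shows that `f` has a continuous logarithm off that arc. Sliding it along the second arc shows
that `f / χ` has one off the second arc, where `χ` is the character of the torus dual to the
homology class `v` of `C`. Hence `χ` has a continuous logarithm off `C`.

If `C'` is a second curve, disjoint from `C`, then `χ` has a logarithm on `C'`, so `v` and `v'` have
intersection number zero and `k • v = k' • v'` with `k`, `k'` not both zero. Then
`f ^ k / f' ^ k'` has a logarithm off the two first arcs, and another one off the two second arcs.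
If the complement of `C ∪ C'` were connected, these would differ there by a constant and glue to a
logarithm off the four endpoints. This is impossible: `f ^ k / f' ^ k'` has winding number `k`
around the zero of `f` and `-k'` around the zero of `f'`. -/

open Set Topology Complex
open scoped FourierTransform

section ContinuousLogarithms

variable {X Y : Type*} [TopologicalSpace X] [TopologicalSpace Y]

/-- `f` has a continuous logarithm on `U`. This is how winding numbers and homotopies of maps into
`ℂ \ {0}` enter. -/
def HasLogOn (f : X → ℂ) (U : Set X) : Prop :=
  ∃ g : X → ℂ, ContinuousOn g U ∧ ∀ z ∈ U, exp (g z) = f z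

namespace HasLogOn

variable {f f' : X → ℂ} {U V : Set X}

theorem ne_zero (hf : HasLogOn f U) {z : X} (hz : z ∈ U) : f z ≠ 0 :=
  let ⟨g, _, hgf⟩ := hf
  hgf z hz ▸ exp_ne_zero (g z)

theorem mono (hf : HasLogOn f U) (hVU : V ⊆ U) : HasLogOn f V :=
  let ⟨g, hg, hgf⟩ := hf
  ⟨g, hg.mono hVU, fun z hz => hgf z (hVU hz)⟩

theorem congr (hf : HasLogOn f U) (hff' : EqOn f f' U) : HasLogOn f' U :=
  let ⟨g, hg, hgf⟩ := hf
  ⟨g, hg, fun z hz => (hgf z hz).trans (hff' hz)⟩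

theorem comp {φ : Y → X} {V : Set Y} (hf : HasLogOn f U) (hφ : ContinuousOn φ V)
    (hVU : MapsTo φ V U) : HasLogOn (f ∘ φ) V :=
  let ⟨g, hg, hgf⟩ := hf
  ⟨g ∘ φ, hg.comp hφ hVU, fun z hz => hgf (φ z) (hVU hz)⟩

theorem mul (hf : HasLogOn f U) (hf' : HasLogOn f' U) : HasLogOn (f * f') U :=
  let ⟨g, hg, hgf⟩ := hf
  let ⟨g', hg', hgf'⟩ := hf'
  ⟨g + g', hg.add hg', fun z hz => by simp [exp_add, hgf z hz, hgf' z hz]⟩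

theorem div (hf : HasLogOn f U) (hf' : HasLogOn f' U) : HasLogOn (f / f') U :=
  let ⟨g, hg, hgf⟩ := hf
  let ⟨g', hg', hgf'⟩ := hf'
  ⟨g - g', hg.sub hg', fun z hz => by simp [exp_sub, hgf z hz, hgf' z hz]⟩

theorem zpow (hf : HasLogOn f U) (k : ℤ) : HasLogOn (f ^ k) U :=
  let ⟨g, hg, hgf⟩ := hf
  ⟨fun z => k * g z, hg.const_mul _, fun z hz => by simp [exp_int_mul, hgf z hz]⟩

theorem const {c : ℂ} (hc : c ≠ 0) (U : Set X) : HasLogOn (fun _ => c) U :=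
  ⟨fun _ => log c, continuousOn_const, fun _ _ => exp_log hc⟩

theorem exists_mem_nhds {p : X} (hf : ContinuousOn f U) (hU : U ∈ 𝓝 p) (hp : f p ≠ 0) :
    ∃ W ∈ 𝓝 p, HasLogOn f W := by
  have hdiv : ContinuousOn (fun z => f z / f p) U := hf.div_const _
  have hslit : ∀ᶠ z in 𝓝 p, f z / f p ∈ slitPlane :=
    (hdiv.continuousAt hU).eventually_mem
      (isOpen_slitPlane.mem_nhds (by simp [div_self hp]))
  refine ⟨_, Filter.inter_mem hU hslit, fun z => log (f z / f p) + log (f p),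
    ((hdiv.mono inter_subset_left).clog fun z hz => hz.2).add continuousOn_const, ?_⟩
  rintro z ⟨-, hz⟩
  rw [exp_add, exp_log hp, exp_log (slitPlane_ne_zero hz), div_mul_cancel₀ _ hp]

theorem of_homotopy {H : unitInterval × X → ℂ} (hH : ContinuousOn H (univ ×ˢ U))
    (hne : ∀ t, ∀ z ∈ U, H (t, z) ≠ 0) (h₀ : HasLogOn (fun z => H (0, z)) U) :
    HasLogOn (fun z => H (1, z)) U := by
  classical
  obtain ⟨g, hg, hgH⟩ := h₀
  let H' : C(unitInterval × U, {z : ℂ // z ≠ 0}) :=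
    ⟨fun a => ⟨H (a.1, a.2), hne a.1 a.2 a.2.2⟩,
      (hH.comp_continuous (by fun_prop) fun a => ⟨mem_univ _, a.2.2⟩).subtype_mk _⟩
  let g' : C(U, ℂ) := ⟨U.domRestrict g, hg.domRestrict⟩
  have hstart : ∀ a, H' (0, a) = ⟨_, exp_ne_zero (g' a)⟩ := fun a =>
    Subtype.ext (hgH a a.2).symm
  let L := isCoveringMap_exp.liftHomotopy H' g' hstart
  have hL : ∀ a, exp (L a) = H' a := fun a =>
    congrArg Subtype.val (congrFun (isCoveringMap_exp.liftHomotopy_lifts H' g' hstart) a)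
  refine ⟨fun z => if hz : z ∈ U then L (1, ⟨z, hz⟩) else 0, ?_, fun z hz => ?_⟩
  · rw [continuousOn_iff_continuous_domRestrict]
    exact (by fun_prop : Continuous fun z : U => L (1, z)).congr fun z => by simp
  · simp only [hz, dif_pos]
    exact hL (1, ⟨z, hz⟩)

end HasLogOn

theorem eq_of_exp_eq_one {S : Set X} (hS : IsPreconnected S) {D : X → ℂ} (hD : ContinuousOn D S)
    (hexp : ∀ x ∈ S, exp (D x) = 1) {x y : X} (hx : x ∈ S) (hy : y ∈ S) : D x = D y :=
  isCoveringMap_exp.constOn_of_comp hS hD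
    (fun a ha b hb => Subtype.ext ((hexp a ha).trans (hexp b hb).symm)) hx hy

theorem exists_exp_eq_one_and_eqOn_add {S : Set X} (hS : IsPreconnected S) {g h : X → ℂ}
    (hg : ContinuousOn g S) (hh : ContinuousOn h S) (hgh : ∀ x ∈ S, exp (g x) = exp (h x)) :
    ∃ c, exp c = 1 ∧ EqOn g (fun x => h x + c) S := by
  rcases S.eq_empty_or_nonempty with rfl | ⟨x₀, hx₀⟩
  · exact ⟨0, exp_zero, eqOn_empty _ _⟩
  have hexp : ∀ x ∈ S, exp (g x - h x) = 1 := fun x hx => by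
    rw [exp_sub, hgh x hx, div_self (exp_ne_zero _)]
  refine ⟨g x₀ - h x₀, hexp x₀ hx₀, fun x hx => ?_⟩
  have := eq_of_exp_eq_one hS (hg.sub hh) hexp hx hx₀
  simp only [Pi.sub_apply] at this
  linear_combination this

theorem HasLogOn.union {f : X → ℂ} {U V : Set X} (hU : IsOpen U) (hV : IsOpen V)
    (hfU : HasLogOn f U) (hfV : HasLogOn f V) (hUV : IsPreconnected (U ∩ V)) :
    HasLogOn f (U ∪ V) := by
  classical
  obtain ⟨g, hg, hgf⟩ := hfU
  obtain ⟨h, hh, hhf⟩ := hfV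
  obtain ⟨c, hc, hgh⟩ := exists_exp_eq_one_and_eqOn_add hUV (hg.mono inter_subset_left)
    (hh.mono inter_subset_right) fun z hz => (hgf z hz.1).trans (hhf z hz.2).symm
  let G := U.piecewise g fun z => h z + c
  have hGU : EqOn G g U := U.piecewise_eqOn _ _
  have hGV : EqOn G (fun z => h z + c) V := fun z hzV => by
    by_cases hzU : z ∈ U
    · exact (hGU hzU).trans (hgh ⟨hzU, hzV⟩)
    · exact U.piecewise_eq_of_notMem _ _ hzU
  refine ⟨G, (hg.congr hGU).union_of_isOpen ((hh.add continuousOn_const).congr hGV) hU hV, ?_⟩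
  rintro z (hz | hz)
  · rw [hGU hz, hgf z hz]
  · rw [hGV hz, exp_add, hc, mul_one, hhf z hz]

theorem not_hasLogOn_zpow {k : ℤ} (hk : k ≠ 0) {W : Set ℂ} (hW : W ∈ 𝓝 0) :
    ¬ HasLogOn (fun w : ℂ => w ^ k) (W \ {0}) := by
  rintro ⟨g, hg, hgk⟩
  obtain ⟨ε, hε, hball⟩ := Metric.nhds_basis_closedBall.mem_iff.1 hW
  let loop : ℝ → ℂ := circleMap 0 ε
  have hloop : ∀ t, loop t ∈ W \ {0} := fun t =>
    ⟨hball (circleMap_mem_closedBall 0 hε.le t), circleMap_ne_center hε.ne'⟩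
  let D : ℝ → ℂ := fun t => g (loop t) - k * (log ε + t * I)
  have hD : Continuous D :=
    (hg.comp_continuous (continuous_circleMap 0 ε) hloop).sub (by fun_prop)
  have hexp : ∀ t, exp (D t) = 1 := fun t => by
    have hε' : (ε : ℂ) ≠ 0 := by exact_mod_cast hε.ne'
    have : loop t = exp (log ε + t * I) := by
      simp [loop, circleMap, exp_add, exp_log hε']
    rw [exp_sub, hgk _ (hloop t), exp_int_mul, ← this]
    exact div_self (zpow_ne_zero _ (hloop t).2)
  have hturn : D 0 = D (2 * Real.pi) :=
    eq_of_exp_eq_one isPreconnected_univ hD.continuousOn (fun t _ => hexp t) trivial trivial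
  have hperiod : loop (2 * Real.pi) = loop 0 := by
    simpa using periodic_circleMap 0 ε 0
  have : (k : ℂ) * (2 * Real.pi * I) = 0 := by
    simp only [D, hperiod] at hturn
    push_cast at hturn
    linear_combination hturn
  simp [hk, Real.pi_ne_zero] at this

theorem not_hasLogOn_zpow_of_hasStrictFDerivAt {E : Type*} [NormedAddCommGroup E]
    [NormedSpace ℝ E] [CompleteSpace E] {f : E → ℂ} {L : E ≃L[ℝ] ℂ} {p : E}
    (hf : HasStrictFDerivAt f (L : E →L[ℝ] ℂ) p) (hp : f p = 0) {k : ℤ} (hk : k ≠ 0)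
    {W : Set E} (hW : W ∈ 𝓝 p) : ¬ HasLogOn (f ^ k) (W ∩ {z | f z ≠ 0}) := by
  intro hlog
  let e := hf.toOpenPartialHomeomorph f
  have hfe : ∀ w ∈ e.target, f (e.symm w) = w := fun w hw => e.right_inv hw
  have hpe : p ∈ e.source := hf.mem_toOpenPartialHomeomorph_source
  have hV : e.target ∩ e.symm ⁻¹' W ∈ 𝓝 (0 : ℂ) := by
    rw [← hp]
    refine Filter.inter_mem (e.open_target.mem_nhds (e.map_source hpe)) ?_
    exact e.tendsto_symm hpe hW
  refine not_hasLogOn_zpow hk hV ((hlog.comp (φ := e.symm) ?_ ?_).congr ?_)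
  · exact e.continuousOn_symm.mono fun w hw => hw.1.1
  · exact fun w hw => ⟨hw.1.2, by rw [mem_ofPred_eq, hfe w hw.1.1]; exact hw.2⟩
  · exact fun w hw => by simp [hfe w hw.1.1]

end ContinuousLogarithms

section Theta

/-- A topological theta function: a continuous function vanishing to first order exactly at the
lattice points. On each strip `n - 1/2 ≤ y ≤ n + 1/2` it interpolates linearly in `y` between
`a ^ n` and `a ^ (n + 1)`, where `a = -e^{-2πix}`. -/
noncomputable def theta (z : ℝ × ℝ) : ℂ :=
  (-𝐞 (-z.1) : ℂ) ^ ⌊z.2 + 1 / 2⌋ *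
    (1 - Int.fract (z.2 + 1 / 2) + Int.fract (z.2 + 1 / 2) * -𝐞 (-z.1))

theorem fourierChar_eq_one_iff {x : ℝ} : 𝐞 x = 1 ↔ ∃ n : ℤ, x = n := by
  rw [Real.fourierChar_apply', Circle.exp_eq_one]
  refine exists_congr fun n => ?_
  rw [mul_comm, mul_left_inj' (by positivity)]

theorem fourierChar_intCast (n : ℤ) : 𝐞 (n : ℝ) = 1 :=
  fourierChar_eq_one_iff.2 ⟨n, rfl⟩

theorem neg_fourierChar_eq (x : ℝ) : (-𝐞 x : ℂ) = 𝐞 (x - 1 / 2) := by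
  have : (𝐞 (1 / 2) : ℂ) = -1 := by
    rw [Real.fourierChar_apply, ← exp_pi_mul_I]
    push_cast
    ring_nf
  rw [AddChar.map_sub_eq_div, Circle.coe_div, this, div_neg, div_one]

theorem neg_fourierChar_ne_zero (x : ℝ) : (-𝐞 x : ℂ) ≠ 0 :=
  neg_ne_zero.2 (Circle.coe_ne_zero _)

/-- The inclusion of the lattice `ℤ²` in the plane. -/
def lattice : ℤ × ℤ →+ ℝ × ℝ :=
  (Int.castAddHom ℝ).prodMap (Int.castAddHom ℝ)

@[simp]
theorem lattice_apply (v : ℤ × ℤ) : lattice v = ((v.1 : ℝ), (v.2 : ℝ)) :=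
  rfl

@[fun_prop]
theorem continuous_theta : Continuous theta := by
  let K : ℝ × ℝ → ℝ → ℂ := fun z t =>
    𝐞 ((z.1 + 1 / 2) * t) * (1 - t + t * 𝐞 (-(z.1 + 1 / 2)))
  have hK : Continuous fun z : ℝ × ℝ => K z (Int.fract (z.2 + 1 / 2)) := by
    refine ContinuousOn.comp_fract (f := K) (Continuous.continuousOn ?_) (by fun_prop) fun z => ?_
    · have := Real.continuous_fourierChar
      fun_prop
    · simp [K, ← Circle.coe_mul, ← AddChar.map_add_eq_mul]
  have htheta : theta = fun z => 𝐞 (-(z.1 + 1 / 2) * (z.2 + 1 / 2)) *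
      K z (Int.fract (z.2 + 1 / 2)) := by
    funext z
    have hexponent : -(z.1 + 1 / 2) * (z.2 + 1 / 2) + (z.1 + 1 / 2) * Int.fract (z.2 + 1 / 2) =
        ⌊z.2 + 1 / 2⌋ • -(z.1 + 1 / 2) := by
      rw [Int.fract, zsmul_eq_mul]
      ring
    rw [theta, neg_fourierChar_eq, ← neg_add', ← mul_assoc, ← Circle.coe_mul,
      ← AddChar.map_add_eq_mul, hexponent, AddChar.map_zsmul_eq_zpow, Circle.coe_zpow]
  have := Real.continuous_fourierChar
  rw [htheta]
  exact Continuous.mul (by fun_prop) hK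

theorem theta_add_lattice (z : ℝ × ℝ) (v : ℤ × ℤ) :
    theta (z + lattice v) = (-𝐞 (-z.1) : ℂ) ^ v.2 * theta z := by
  have hchar : 𝐞 (-(z.1 + v.1)) = 𝐞 (-z.1) := by
    rw [neg_add, AddChar.map_add_eq_mul, ← Int.cast_neg, fourierChar_intCast, mul_one]
  simp only [theta, lattice_apply, Prod.fst_add, Prod.snd_add, hchar, add_right_comm z.2 (v.2 : ℝ),
    Int.floor_add_intCast, Int.fract_add_intCast, zpow_add₀ (neg_fourierChar_ne_zero _)]
  ring

theorem eq_one_half_of_interpolation_eq_zero {t : ℝ} (ht : t ∈ Icc (0 : ℝ) 1) {a : ℂ}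
    (ha : ‖a‖ = 1) (h : 1 - t + t * a = 0) : t = 1 / 2 ∧ a = -1 := by
  have hnorm : ‖((1 - t : ℝ) : ℂ)‖ = ‖(t : ℂ) * a‖ := by
    rw [← norm_neg (_ * a)]
    congr 1
    push_cast
    linear_combination h
  rw [norm_mul, ha, mul_one, norm_real, norm_real, Real.norm_of_nonneg ht.1,
    Real.norm_of_nonneg (by linarith [ht.2])] at hnorm
  obtain rfl : t = 1 / 2 := by linarith
  refine ⟨rfl, ?_⟩
  push_cast at h
  linear_combination 2 * h

theorem theta_eq_zero_iff {z : ℝ × ℝ} : theta z = 0 ↔ ∃ v, z = lattice v := by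
  constructor
  · intro h
    obtain ⟨ht, ha⟩ := eq_one_half_of_interpolation_eq_zero
      ⟨Int.fract_nonneg (z.2 + 1 / 2), (Int.fract_lt_one _).le⟩ (by rw [norm_neg, Circle.norm_coe])
      ((mul_eq_zero.1 h).resolve_left (zpow_ne_zero _ (neg_fourierChar_ne_zero _)))
    obtain ⟨n, hn⟩ := fourierChar_eq_one_iff.1 (Circle.ext (neg_injective ha))
    refine ⟨(-n, ⌊z.2 + 1 / 2⌋), Prod.ext ?_ ?_⟩
    · rw [lattice_apply, Int.cast_neg]
      linarith
    · have := Int.floor_add_fract (z.2 + 1 / 2)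
      rw [lattice_apply]
      linarith
  · rintro ⟨v, rfl⟩
    have hzero : theta 0 = 0 := by
      have : Int.fract (1 / 2 : ℝ) = 1 / 2 := Int.fract_eq_self.2 (by norm_num)
      norm_num [theta, this]
    rw [← zero_add (lattice v), theta_add_lattice, hzero, mul_zero]

theorem theta_eq_of_mem_strip {z : ℝ × ℝ} (hz : z.2 ∈ Ico (-1 / 2 : ℝ) (1 / 2)) :
    theta z = 1 / 2 - z.2 - (1 / 2 + z.2) * 𝐞 (-z.1) := by
  have hfloor : ⌊z.2 + 1 / 2⌋ = 0 :=
    Int.floor_eq_zero_iff.2 ⟨by linarith [hz.1], by linarith [hz.2]⟩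
  simp only [theta, Int.fract, hfloor, zpow_zero]
  push_cast
  ring

/-- The derivative `(x, y) ↦ -2y + πix` of `theta` at the origin. -/
noncomputable def thetaDeriv : (ℝ × ℝ) ≃L[ℝ] ℂ :=
  (ContinuousLinearEquiv.prodComm ℝ ℝ ℝ).trans <|
    ((ContinuousLinearEquiv.unitsEquivAut ℝ (Units.mk0 (-2) (by norm_num))).prodCongr
      (ContinuousLinearEquiv.unitsEquivAut ℝ (Units.mk0 Real.pi Real.pi_ne_zero))).trans
    equivRealProdCLM.symm

theorem thetaDeriv_apply (z : ℝ × ℝ) : thetaDeriv z = Real.pi * z.1 * I - 2 * z.2 := by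
  have : thetaDeriv z = equivRealProdCLM.symm (z.2 * (-2), z.1 * Real.pi) := rfl
  rw [this, equivRealProdCLM_symm_apply]
  push_cast
  ring

theorem hasStrictFDerivAt_theta : HasStrictFDerivAt theta (thetaDeriv : ℝ × ℝ →L[ℝ] ℂ) 0 := by
  have hx : HasStrictFDerivAt (fun z : ℝ × ℝ => (z.1 : ℂ))
      (ofRealCLM.comp (ContinuousLinearMap.fst ℝ ℝ ℝ)) 0 :=
    (ofRealCLM.comp (ContinuousLinearMap.fst ℝ ℝ ℝ)).hasStrictFDerivAt
  have hy : HasStrictFDerivAt (fun z : ℝ × ℝ => (z.2 : ℂ))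
      (ofRealCLM.comp (ContinuousLinearMap.snd ℝ ℝ ℝ)) 0 :=
    (ofRealCLM.comp (ContinuousLinearMap.snd ℝ ℝ ℝ)).hasStrictFDerivAt
  have hstrip : ∀ᶠ z : ℝ × ℝ in 𝓝 0, z.2 ∈ Ico (-1 / 2 : ℝ) (1 / 2) :=
    continuous_snd.continuousAt.eventually_mem (Ico_mem_nhds (by norm_num) (by norm_num))
  refine HasStrictFDerivAt.congr_of_eventuallyEq (HasStrictFDerivAt.congr_fderiv
    ((hy.const_sub (1 / 2)).sub
      ((hy.const_add (1 / 2)).mul (hx.const_mul (-(2 * Real.pi * I))).cexp)) ?_) ?_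
  · refine ContinuousLinearMap.ext fun z => ?_
    rw [ContinuousLinearEquiv.coe_coe, thetaDeriv_apply]
    simp only [Prod.fst_zero, Prod.snd_zero, ofReal_zero, mul_zero, exp_zero, sub_apply, neg_apply,
      add_apply, smul_apply, ContinuousLinearMap.comp_apply, ContinuousLinearMap.coe_fst',
      ContinuousLinearMap.coe_snd', ofRealCLM_apply, smul_eq_mul]
    ring
  · filter_upwards [hstrip] with z hz
    rw [theta_eq_of_mem_strip hz, Real.fourierChar_apply, Pi.sub_apply, Pi.mul_apply]
    push_cast
    ring_nf

end Theta

/-- The torus `T² = ℝ²/ℤ²`. -/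
abbrev Torus : Type :=
  AddCircle (1 : ℝ) × AddCircle (1 : ℝ)

namespace Torus

/-- The projection of the plane onto the torus. -/
def proj : ℝ × ℝ →+ Torus :=
  (QuotientAddGroup.mk' _).prodMap (QuotientAddGroup.mk' _)

theorem isOpenQuotientMap_proj : IsOpenQuotientMap proj :=
  QuotientAddGroup.isOpenQuotientMap_mk.prodMap QuotientAddGroup.isOpenQuotientMap_mk

theorem proj_eq_proj_iff {z w : ℝ × ℝ} : proj z = proj w ↔ ∃ v, z = w + lattice v := by
  simp_rw [← sub_eq_zero (a := proj z), ← map_sub, ← sub_eq_iff_eq_add', Prod.ext_iff, Prod.exists]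
  have hcoe (x : ℝ) : (x : AddCircle (1 : ℝ)) = 0 ↔ ∃ n : ℤ, x = n :=
    (AddCircle.coe_eq_zero_iff 1).trans <| exists_congr fun n => by rw [zsmul_one, eq_comm]
  exact (and_congr (hcoe _) (hcoe _)).trans exists_and_exists_comm

theorem theta_sub_eq_zero_iff {z w : ℝ × ℝ} : theta (z - w) = 0 ↔ proj z = proj w := by
  simp_rw [theta_eq_zero_iff, sub_eq_iff_eq_add', proj_eq_proj_iff]

/-- The character `(x, y) ↦ e^{2πi(v₂x - v₁y)}` of the torus. -/
noncomputable def character (v : ℤ × ℤ) (x : Torus) : ℂ :=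
  AddCircle.toCircle (v.2 • x.1 - v.1 • x.2)

theorem character_proj (v : ℤ × ℤ) (z : ℝ × ℝ) :
    character v (proj z) = 𝐞 (v.2 * z.1 - v.1 * z.2) := by
  have : v.2 • (proj z).1 - v.1 • (proj z).2 =
      ((v.2 * z.1 - v.1 * z.2 : ℝ) : AddCircle (1 : ℝ)) := by
    simp [proj]
  rw [character, this, AddCircle.toCircle_apply_mk, Real.fourierChar_apply', div_one]

theorem character_zpow (v : ℤ × ℤ) (k : ℤ) : character v ^ k = character (k • v) := by
  funext x
  obtain ⟨z, rfl⟩ := isOpenQuotientMap_proj.surjective x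
  simp only [Pi.pow_apply, character_proj, ← Circle.coe_zpow, ← AddChar.map_zsmul_eq_zpow]
  congr 2
  simp
  ring

/-- A quotient of translates of `theta`, corrected by an exponential factor that makes it
`ℤ²`-periodic. -/
noncomputable def planeDipole (p q z : ℝ × ℝ) : ℂ :=
  theta (z - p) / theta (z - q) * 𝐞 (-((p.1 - q.1) * z.2))

theorem planeDipole_add_lattice (p q z : ℝ × ℝ) (v : ℤ × ℤ) :
    planeDipole p q (z + lattice v) = planeDipole p q z := by
  have hexp : (𝐞 (-((p.1 - q.1) * (z + lattice v).2)) : ℂ) =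
      (-𝐞 (-(z - q).1) / -𝐞 (-(z - p).1)) ^ v.2 * 𝐞 (-((p.1 - q.1) * z.2)) := by
    rw [neg_div_neg_eq, ← Circle.coe_div, ← AddChar.map_sub_eq_div, ← Circle.coe_zpow,
      ← AddChar.map_zsmul_eq_zpow, ← Circle.coe_mul, ← AddChar.map_add_eq_mul]
    congr 2
    simp only [lattice_apply, Prod.snd_add, Prod.fst_sub, zsmul_eq_mul]
    ring
  have hq := zpow_ne_zero v.2 (neg_fourierChar_ne_zero (-(z - q).1))
  have hp := zpow_ne_zero v.2 (neg_fourierChar_ne_zero (-(z - p).1))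
  rw [planeDipole, planeDipole, add_sub_right_comm, add_sub_right_comm, theta_add_lattice,
    theta_add_lattice, hexp, div_zpow]
  field_simp

/-- A function on the torus with a simple zero at `proj p`, a simple pole at `proj q` and no other
zeros or poles, in the topological sense. Unlike a meromorphic function it exists for all `p` and
`q`; it depends on the lifts `p` and `q`, not only on the points of the torus below them. -/
noncomputable def dipole (p q : ℝ × ℝ) : Torus → ℂ :=
  Function.extend proj (planeDipole p q) fun _ => 0

theorem dipole_proj (p q z : ℝ × ℝ) : dipole p q (proj z) = planeDipole p q z := by
  refine Function.FactorsThrough.extend_apply (fun a b hab => ?_) _ z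
  obtain ⟨v, rfl⟩ := proj_eq_proj_iff.1 hab
  exact planeDipole_add_lattice p q b v

theorem dipole_ne_zero {p q : ℝ × ℝ} {x : Torus} (hp : x ≠ proj p) (hq : x ≠ proj q) :
    dipole p q x ≠ 0 := by
  obtain ⟨z, rfl⟩ := isOpenQuotientMap_proj.surjective x
  rw [dipole_proj]
  exact mul_ne_zero (div_ne_zero (mt theta_sub_eq_zero_iff.1 hp) (mt theta_sub_eq_zero_iff.1 hq))
    (Circle.coe_ne_zero _)

theorem dipole_self {q : ℝ × ℝ} {x : Torus} (hq : x ≠ proj q) : dipole q q x = 1 := by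
  obtain ⟨z, rfl⟩ := isOpenQuotientMap_proj.surjective x
  simp [dipole_proj, planeDipole, div_self (mt theta_sub_eq_zero_iff.1 hq)]

theorem dipole_mul_dipole (p r : ℝ × ℝ) {q : ℝ × ℝ} {x : Torus} (hq : x ≠ proj q) :
    dipole p q x * dipole q r x = dipole p r x := by
  obtain ⟨z, rfl⟩ := isOpenQuotientMap_proj.surjective x
  have hexp : (𝐞 (-((p.1 - r.1) * z.2)) : ℂ) =
      𝐞 (-((p.1 - q.1) * z.2)) * 𝐞 (-((q.1 - r.1) * z.2)) := by
    rw [← Circle.coe_mul, ← AddChar.map_add_eq_mul]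
    ring_nf
  simp only [dipole_proj, planeDipole, hexp]
  field_simp [mt theta_sub_eq_zero_iff.1 hq]

theorem dipole_add_lattice (q : ℝ × ℝ) (v : ℤ × ℤ) {x : Torus} (hq : x ≠ proj q) :
    dipole (q + lattice v) q x = (-𝐞 q.1 : ℂ) ^ (-v.2) * character v x := by
  obtain ⟨z, rfl⟩ := isOpenQuotientMap_proj.surjective x
  have htheta : theta (z - q) ≠ 0 := mt theta_sub_eq_zero_iff.1 hq
  have hshift : theta (z - (q + lattice v)) = (-𝐞 (-(z - q).1) : ℂ) ^ (-v.2) * theta (z - q) := by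
    rw [← Prod.snd_neg, ← theta_add_lattice, map_neg, ← sub_eq_add_neg, sub_sub]
  rw [dipole_proj, planeDipole, hshift, mul_div_cancel_right₀ _ htheta, character_proj,
    neg_fourierChar_eq, neg_fourierChar_eq]
  simp only [← Circle.coe_zpow, ← AddChar.map_zsmul_eq_zpow, ← Circle.coe_mul,
    ← AddChar.map_add_eq_mul]
  congr 2
  simp
  ring

theorem continuousOn_dipole (q : ℝ × ℝ) :
    ContinuousOn (fun a : (ℝ × ℝ) × Torus => dipole a.1 q a.2) (univ ×ˢ {proj q}ᶜ) := by
  rintro ⟨p, x⟩ ⟨-, hx⟩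
  obtain ⟨z, rfl⟩ := isOpenQuotientMap_proj.surjective x
  refine ContinuousAt.continuousWithinAt ?_
  refine ((IsOpenQuotientMap.id.prodMap isOpenQuotientMap_proj).continuousAt_comp_iff
    (x := (p, z))).1 ?_
  have hplane : (fun a : (ℝ × ℝ) × Torus => dipole a.1 q a.2) ∘ Prod.map id proj =
      fun a => theta (a.2 - a.1) / theta (a.2 - q) * 𝐞 (-((a.1.1 - q.1) * a.2.2)) :=
    funext fun a => dipole_proj a.1 q a.2
  have := Real.continuous_fourierChar
  rw [hplane]
  have hdiv : ContinuousAt (fun a : (ℝ × ℝ) × (ℝ × ℝ) => theta (a.2 - a.1) / theta (a.2 - q))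
      (p, z) :=
    ContinuousAt.div (by fun_prop) (by fun_prop) (mt theta_sub_eq_zero_iff.1 hx)
  exact hdiv.mul (by fun_prop)

theorem not_hasLogOn_dipole_zpow {p q : ℝ × ℝ} (hpq : proj p ≠ proj q) {k : ℤ} (hk : k ≠ 0)
    {W : Set Torus} (hW : W ∈ 𝓝 (proj p)) : ¬ HasLogOn (dipole p q ^ k) (W \ {proj p}) := by
  intro hlog
  let u : ℝ × ℝ → ℂ := fun z => 𝐞 (-((p.1 - q.1) * z.2)) / theta (z - q)
  have hdipole : ∀ z, dipole p q (proj z) = theta (z - p) * u z := fun z => by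
    rw [dipole_proj, planeDipole, div_mul_eq_mul_div, mul_div_assoc]
  have hp : p ∈ {z | theta (z - q) ≠ 0} := mt theta_sub_eq_zero_iff.1 hpq
  have := Real.continuous_fourierChar
  have hden : IsOpen {z | theta (z - q) ≠ 0} := isOpen_ne_fun (by fun_prop) continuous_const
  obtain ⟨V, hV, hu⟩ := HasLogOn.exists_mem_nhds (f := u)
    (ContinuousOn.div (by fun_prop) (by fun_prop) fun z hz => hz) (hden.mem_nhds hp)
    (div_ne_zero (Circle.coe_ne_zero _) hp)
  have hderiv : HasStrictFDerivAt (fun z => theta (z - p)) (thetaDeriv : ℝ × ℝ →L[ℝ] ℂ) p := by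
    have hzero : HasStrictFDerivAt theta (thetaDeriv : ℝ × ℝ →L[ℝ] ℂ) (p - p) :=
      (sub_self p).symm ▸ hasStrictFDerivAt_theta
    exact hzero.comp (f := fun z => z - p) p ((hasStrictFDerivAt_id p).sub_const p)
  refine not_hasLogOn_zpow_of_hasStrictFDerivAt hderiv (theta_sub_eq_zero_iff.2 rfl) hk
    (Filter.inter_mem hV (isOpenQuotientMap_proj.continuous.continuousAt hW)) ?_
  refine ((hlog.comp isOpenQuotientMap_proj.continuous.continuousOn fun z hz => ⟨hz.1.2, ?_⟩).div
    ((hu.mono fun z hz => hz.1.1).zpow k)).congr fun z hz => ?_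
  · exact mt theta_sub_eq_zero_iff.2 hz.2
  · have := zpow_ne_zero k (hu.ne_zero hz.1.1)
    simp [hdipole, mul_zpow, this]

theorem hasLogOn_dipole_compl_range {p q : ℝ × ℝ} (γ : Path q p) :
    HasLogOn (dipole p q) (range (proj ∘ γ))ᶜ := by
  have hne : ∀ t, ∀ x ∈ (range (proj ∘ γ))ᶜ, x ≠ proj (γ t) := fun t x hx h => hx ⟨t, h.symm⟩
  have hq : ∀ x ∈ (range (proj ∘ γ))ᶜ, x ≠ proj q := by simpa using hne 0
  have hcont : ContinuousOn (fun a : unitInterval × Torus => dipole (γ a.1) q a.2)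
      (univ ×ˢ (range (proj ∘ γ))ᶜ) :=
    (continuousOn_dipole q).comp (f := Prod.map γ id) (by fun_prop)
      fun a ha => ⟨mem_univ _, hq a.2 ha.2⟩
  have hstart : HasLogOn (fun x => dipole (γ 0) q x) (range (proj ∘ γ))ᶜ :=
    (HasLogOn.const one_ne_zero _).congr fun x hx => by rw [γ.source, dipole_self (hq x hx)]
  simpa using HasLogOn.of_homotopy hcont
    (fun t x hx => dipole_ne_zero (hne t x hx) (hq x hx)) hstart

theorem hasLogOn_dipole_compl_arc {c : ℝ → ℝ × ℝ} (hc : Continuous c) {α β : ℝ} (hαβ : α ≤ β) :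
    HasLogOn (dipole (c β) (c α)) (proj ∘ c '' Icc α β)ᶜ := by
  simpa [← Function.comp_assoc, range_comp _ (Path.segment α β), Path.range_segment,
    segment_eq_Icc hαβ] using hasLogOn_dipole_compl_range ((Path.segment α β).map hc)

theorem isClosed_arc {c : ℝ → ℝ × ℝ} (hc : Continuous c) (α β : ℝ) :
    IsClosed (proj ∘ c '' Icc α β) :=
  (isCompact_Icc.image (isOpenQuotientMap_proj.continuous.comp hc)).isClosed

theorem exists_continuous_lift {γ : ℝ → Torus} (hγ : Continuous γ) :
    ∃ c : ℝ → ℝ × ℝ, Continuous c ∧ ∀ t, proj (c t) = γ t := by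
  have hcircle {f : ℝ → AddCircle (1 : ℝ)} (hf : Continuous f) :
      ∃ g : ℝ → ℝ, Continuous g ∧ ∀ t, (g t : AddCircle (1 : ℝ)) = f t := by
    obtain ⟨x₀, hx₀⟩ := QuotientAddGroup.mk_surjective (f 0)
    obtain ⟨g, ⟨-, hg⟩, -⟩ :=
      (AddCircle.isCoveringMap_coe (1 : ℝ)).existsUnique_continuousMap_lifts ⟨f, hf⟩ 0 x₀ hx₀
    exact ⟨g, g.continuous, congrFun hg⟩
  obtain ⟨g₁, hg₁, hγ₁⟩ := hcircle (continuous_fst.comp hγ)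
  obtain ⟨g₂, hg₂, hγ₂⟩ := hcircle (continuous_snd.comp hγ)
  exact ⟨fun t => (g₁ t, g₂ t), hg₁.prodMk hg₂, fun t => Prod.ext (hγ₁ t) (hγ₂ t)⟩

end Torus

/-- A simple closed curve in a topological space, as a set of points. -/
def IsSimpleClosedCurve {X : Type*} [TopologicalSpace X] (C : Set X) : Prop :=
  Nonempty (C ≃ₜ Metric.sphere (0 : EuclideanSpace ℝ (Fin 2)) 1)

theorem nonempty_addCircle_homeomorph_sphere :
    Nonempty (AddCircle (1 : ℝ) ≃ₜ Metric.sphere (0 : EuclideanSpace ℝ (Fin 2)) 1) := by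
  let e : Circle ≃ₜ Metric.sphere (0 : EuclideanSpace ℝ (Fin 2)) 1 :=
    orthonormalBasisOneI.repr.toHomeomorph.subtype fun z => by
      simp [Submonoid.unitSphere]
  exact ⟨(AddCircle.homeomorphCircle one_ne_zero).trans e⟩

theorem exists_zsmul_eq_zsmul {v w : ℤ × ℤ} (h : v.1 * w.2 = v.2 * w.1) :
    ∃ k l : ℤ, (k ≠ 0 ∨ l ≠ 0) ∧ k • v = l • w := by
  by_cases hv₁ : v.1 = 0
  · by_cases hv₂ : v.2 = 0
    · exact ⟨1, 0, .inl one_ne_zero, by ext <;> simp [hv₁, hv₂]⟩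
    · exact ⟨w.2, v.2, .inr hv₂, by ext <;> simp <;> linarith⟩
  · exact ⟨w.1, v.1, .inr hv₁, by ext <;> simp <;> linarith⟩

/-- A parametrization of the simple closed curve `C` in the torus, with a lift to the plane. The
class `cls` is the homology class of the curve. -/
structure LiftedLoop (C : Set Torus) where
  param : AddCircle (1 : ℝ) ≃ₜ C
  lift : ℝ → ℝ × ℝ
  continuous_lift : Continuous lift
  proj_lift : ∀ t, Torus.proj (lift t) = param t
  cls : ℤ × ℤ
  lift_one : lift 1 = lift 0 + lattice cls

theorem IsSimpleClosedCurve.nonempty_liftedLoop {C : Set Torus} (hC : IsSimpleClosedCurve C) :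
    Nonempty (LiftedLoop C) := by
  obtain ⟨e⟩ := nonempty_addCircle_homeomorph_sphere
  obtain ⟨e'⟩ := hC
  let param := e.trans e'.symm
  have hparam : Continuous fun t : ℝ => (param t : Torus) :=
    continuous_subtype_val.comp (param.continuous.comp (AddCircle.continuous_mk' 1))
  obtain ⟨lift, hlift, hproj⟩ := Torus.exists_continuous_lift hparam
  have hclosed : Torus.proj (lift 1) = Torus.proj (lift 0) := by
    have : ((1 : ℝ) : AddCircle (1 : ℝ)) = ((0 : ℝ) : AddCircle (1 : ℝ)) := AddCircle.coe_period 1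
    simp only [hproj, this]
  obtain ⟨v, hv⟩ := Torus.proj_eq_proj_iff.1 hclosed
  exact ⟨param, lift, hlift, hproj, v, hv⟩

theorem IsSimpleClosedCurve.isClosed {X : Type*} [TopologicalSpace X] [T2Space X] {C : Set X}
    (hC : IsSimpleClosedCurve C) : IsClosed C := by
  obtain ⟨e⟩ := hC
  have : CompactSpace C := e.symm.compactSpace
  exact (isCompact_iff_compactSpace.2 this).isClosed

namespace LiftedLoop

variable {C C' : Set Torus} (L : LiftedLoop C) (L' : LiftedLoop C')

open Torus

/-- The lift of the common endpoint of the two arcs at which `L.dipole` has its zero. -/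
noncomputable def zero : ℝ × ℝ :=
  L.lift (1 / 2)

/-- The lift of the common endpoint of the two arcs at which `L.dipole` has its pole. -/
def pole : ℝ × ℝ :=
  L.lift 0

/-- The first half of the curve. -/
def firstArc : Set Torus :=
  proj ∘ L.lift '' Icc 0 (1 / 2)

/-- The second half of the curve. -/
def secondArc : Set Torus :=
  proj ∘ L.lift '' Icc (1 / 2) 1

/-- The dipole with its zero and its pole at the endpoints of the two arcs of the curve. -/
noncomputable def dipole : Torus → ℂ :=
  Torus.dipole L.zero L.pole

theorem proj_lift_mem (t : ℝ) : proj (L.lift t) ∈ C :=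
  L.proj_lift t ▸ (L.param t).2

theorem proj_lift_one : proj (L.lift 1) = proj L.pole :=
  proj_eq_proj_iff.2 ⟨_, L.lift_one⟩

theorem proj_lift_eq_iff {s t : ℝ} :
    proj (L.lift s) = proj (L.lift t) ↔ (s : AddCircle (1 : ℝ)) = t := by
  rw [L.proj_lift, L.proj_lift, Subtype.coe_inj, L.param.injective.eq_iff]

theorem proj_zero_ne_proj_pole : proj L.zero ≠ proj L.pole := by
  rw [zero, pole, Ne, proj_lift_eq_iff,
    AddCircle.coe_eq_coe_iff_of_mem_Ico (a := 0) (by norm_num) (by norm_num)]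
  norm_num

theorem firstArc_union_secondArc : L.firstArc ∪ L.secondArc = C := by
  have hproj : proj ∘ L.lift = (↑) ∘ L.param ∘ ((↑) : ℝ → AddCircle (1 : ℝ)) := funext L.proj_lift
  have hcircle : ((↑) : ℝ → AddCircle (1 : ℝ)) '' Icc 0 1 = univ := by
    simpa using AddCircle.coe_image_Icc_eq (1 : ℝ) 0
  rw [firstArc, secondArc, ← image_union, Icc_union_Icc_eq_Icc (by norm_num) (by norm_num), hproj,
    image_comp, image_comp, hcircle, image_univ, L.param.surjective.range_eq, image_univ,
    Subtype.range_coe]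

theorem firstArc_inter_secondArc : L.firstArc ∩ L.secondArc ⊆ {proj L.zero, proj L.pole} := by
  rintro _ ⟨⟨s, hs, rfl⟩, t, ht, hst⟩
  rcases ht.2.eq_or_lt with rfl | ht₁
  · exact .inr (hst.symm.trans L.proj_lift_one)
  · have : t = s := (AddCircle.coe_eq_coe_iff_of_mem_Ico (a := 0)
      ⟨by linarith [ht.1], by simpa⟩ ⟨hs.1, by linarith [hs.2]⟩).1 (L.proj_lift_eq_iff.1 hst)
    have : s = 1 / 2 := by linarith [ht.1, hs.2]
    exact .inl (this ▸ rfl)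

theorem hasLogOn_dipole : HasLogOn L.dipole L.firstArcᶜ :=
  hasLogOn_dipole_compl_arc L.continuous_lift (by norm_num)

/-- Along the second arc the dipole has its pole at `L.lift 1` instead of `L.lift 0`; the character
accounts for the difference. -/
theorem hasLogOn_dipole_div_character :
    HasLogOn (L.dipole / character L.cls) L.secondArcᶜ := by
  have harc : HasLogOn (Torus.dipole (L.pole + lattice L.cls) L.zero) L.secondArcᶜ :=
    L.lift_one ▸ hasLogOn_dipole_compl_arc L.continuous_lift (by norm_num)
  refine ((HasLogOn.const (zpow_ne_zero (-L.cls.2) (neg_fourierChar_ne_zero L.pole.1)) _).div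
    harc).congr fun x hx => ?_
  have hzero : x ≠ proj L.zero := fun h => hx ⟨1 / 2, by norm_num, h.symm⟩
  have hpole : x ≠ proj L.pole := fun h => hx ⟨1, by norm_num, L.proj_lift_one.trans h.symm⟩
  have hmul := (dipole_mul_dipole (L.pole + lattice L.cls) L.pole hzero).trans
    (dipole_add_lattice L.pole L.cls hpole)
  have hχ : character L.cls x ≠ 0 := Circle.coe_ne_zero _
  rw [Pi.div_apply, Pi.div_apply, div_eq_div_iff (harc.ne_zero hx) hχ, ← hmul, mul_comm]
  rfl

theorem hasLogOn_character : HasLogOn (character L.cls) Cᶜ := by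
  have hC : Cᶜ = L.firstArcᶜ ∩ L.secondArcᶜ := by
    rw [← compl_union, L.firstArc_union_secondArc]
  rw [hC]
  refine ((L.hasLogOn_dipole.mono inter_subset_left).div
    (L.hasLogOn_dipole_div_character.mono inter_subset_right)).congr fun x hx => ?_
  exact div_div_cancel₀ (L.hasLogOn_dipole.ne_zero hx.1)

/-- The winding number of `character v` along the curve is the intersection number of the classes
`v` and `L.cls`. -/
theorem intersection_eq_zero {v : ℤ × ℤ} (hv : HasLogOn (character v) C) :
    v.1 * L.cls.2 = v.2 * L.cls.1 := by
  obtain ⟨g, hg, hexp⟩ := hv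
  let D : ℝ → ℂ := fun t =>
    g (proj (L.lift t)) - 2 * Real.pi * (v.2 * (L.lift t).1 - v.1 * (L.lift t).2 : ℝ) * I
  have hD : Continuous D := by
    have hlift := L.continuous_lift
    exact (hg.comp_continuous (isOpenQuotientMap_proj.continuous.comp hlift) L.proj_lift_mem).sub
      (by fun_prop)
  have hDexp : ∀ t, exp (D t) = 1 := fun t => by
    rw [exp_sub, hexp _ (L.proj_lift_mem t), character_proj, Real.fourierChar_apply]
    push_cast
    exact div_self (exp_ne_zero _)
  have hends : D 0 = D 1 :=
    eq_of_exp_eq_one isPreconnected_univ hD.continuousOn (fun t _ => hDexp t) trivial trivial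
  have hcancel : (2 * Real.pi * I : ℂ) * (v.1 * L.cls.2 - v.2 * L.cls.1) = 0 := by
    simp only [D, L.proj_lift_one, pole] at hends
    simp only [L.lift_one, lattice_apply, Prod.fst_add, Prod.snd_add] at hends
    push_cast at hends
    linear_combination -hends
  exact_mod_cast sub_eq_zero.1 ((mul_eq_zero.1 hcancel).resolve_left two_pi_I_ne_zero)

theorem exists_zsmul_cls_eq (hCC' : Disjoint C C') :
    ∃ k k' : ℤ, (k ≠ 0 ∨ k' ≠ 0) ∧ k • L.cls = k' • L'.cls :=
  exists_zsmul_eq_zsmul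
    (L'.intersection_eq_zero (L.hasLogOn_character.mono hCC'.subset_compl_left))

theorem isClosed_firstArc : IsClosed L.firstArc :=
  isClosed_arc L.continuous_lift _ _

theorem isClosed_secondArc : IsClosed L.secondArc :=
  isClosed_arc L.continuous_lift _ _

theorem firstArc_subset : L.firstArc ⊆ C :=
  subset_union_left.trans L.firstArc_union_secondArc.subset

theorem secondArc_subset : L.secondArc ⊆ C :=
  subset_union_right.trans L.firstArc_union_secondArc.subset

theorem hasLogOn_div_compl_firstArcs (k k' : ℤ) :
    HasLogOn (L.dipole ^ k / L'.dipole ^ k') (L.firstArc ∪ L'.firstArc)ᶜ := by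
  rw [compl_union]
  exact ((L.hasLogOn_dipole.mono inter_subset_left).zpow k).div
    ((L'.hasLogOn_dipole.mono inter_subset_right).zpow k')

theorem hasLogOn_div_compl_secondArcs {k k' : ℤ} (hcls : k • L.cls = k' • L'.cls) :
    HasLogOn (L.dipole ^ k / L'.dipole ^ k') (L.secondArc ∪ L'.secondArc)ᶜ := by
  rw [compl_union]
  refine (((L.hasLogOn_dipole_div_character.mono inter_subset_left).zpow k).div
    ((L'.hasLogOn_dipole_div_character.mono inter_subset_right).zpow k')).congr fun x _ => ?_
  have hχ : character (k' • L'.cls) x ≠ 0 := Circle.coe_ne_zero _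
  rw [div_zpow, div_zpow, character_zpow, character_zpow, hcls]
  exact div_div_div_cancel_right₀ hχ _ _

/-- The common endpoints of the two arcs, in the torus. -/
def endpoints : Set Torus :=
  {proj L.zero, proj L.pole}

theorem endpoints_subset : L.endpoints ⊆ C :=
  pair_subset (L.proj_lift_mem _) (L.proj_lift_mem _)

theorem isClosed_endpoints : IsClosed L.endpoints :=
  ((finite_singleton _).insert _).isClosed

theorem firstArcs_inter_secondArcs (hCC' : Disjoint C C') {K : Set Torus} (hCK : Disjoint C K)
    (hCK' : Disjoint C' K) :
    (L.firstArc ∪ L'.firstArc ∪ K) ∩ (L.secondArc ∪ L'.secondArc) ⊆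
      L.endpoints ∪ L'.endpoints := by
  rintro x ⟨(hx | hx) | hx, hx' | hx'⟩
  · exact .inl (L.firstArc_inter_secondArc ⟨hx, hx'⟩)
  · exact (hCC'.notMem_of_mem_left (L.firstArc_subset hx) (L'.secondArc_subset hx')).elim
  · exact (hCC'.notMem_of_mem_left (L.secondArc_subset hx') (L'.firstArc_subset hx)).elim
  · exact .inr (L'.firstArc_inter_secondArc ⟨hx, hx'⟩)
  · exact (hCK.notMem_of_mem_left (L.secondArc_subset hx') hx).elim
  · exact (hCK'.notMem_of_mem_left (L'.secondArc_subset hx') hx).elim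

theorem hasLogOn_div_compl_endpoints (hCC' : Disjoint C C') {K : Set Torus} (hK : IsClosed K)
    (hCK : Disjoint C K) (hCK' : Disjoint C' K) (hconn : IsPreconnected (C ∪ C' ∪ K)ᶜ) {k k' : ℤ}
    (hcls : k • L.cls = k' • L'.cls) :
    HasLogOn (L.dipole ^ k / L'.dipole ^ k') (L.endpoints ∪ L'.endpoints)ᶜ := by
  have hfirst := (L.hasLogOn_div_compl_firstArcs L' k k').mono
    (compl_subset_compl.2 (subset_union_left (t := K)))
  have hsecond := L.hasLogOn_div_compl_secondArcs L' hcls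
  have hcover : (L.firstArc ∪ L'.firstArc ∪ K) ∪ (L.secondArc ∪ L'.secondArc) = C ∪ C' ∪ K := by
    rw [union_right_comm, union_union_union_comm, L.firstArc_union_secondArc,
      L'.firstArc_union_secondArc]
  refine (hfirst.union ?_ ?_ hsecond ?_).mono ?_
  · exact ((L.isClosed_firstArc.union L'.isClosed_firstArc).union hK).isOpen_compl
  · exact (L.isClosed_secondArc.union L'.isClosed_secondArc).isOpen_compl
  · rwa [← compl_union, hcover]
  · rw [← compl_inter]
    exact compl_subset_compl.2 (L.firstArcs_inter_secondArcs L' hCC' hCK hCK')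

theorem continuousOn_dipole : ContinuousOn L.dipole L.endpointsᶜ :=
  (Torus.continuousOn_dipole L.pole).comp (f := fun x => (L.zero, x)) (by fun_prop)
    fun _ hx => ⟨mem_univ _, fun h => hx (.inr h)⟩

theorem dipole_ne_zero {x : Torus} (hx : x ∈ L.endpointsᶜ) : L.dipole x ≠ 0 :=
  Torus.dipole_ne_zero (fun h => hx (.inl h)) fun h => hx (.inr h)

theorem eq_zero_of_hasLogOn_div (hCC' : Disjoint C C') {k k' : ℤ}
    (hlog : HasLogOn (L.dipole ^ k / L'.dipole ^ k') (L.endpoints ∪ L'.endpoints)ᶜ) : k = 0 := by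
  by_contra hk
  have hopen : IsOpen L'.endpointsᶜ := L'.isClosed_endpoints.isOpen_compl
  have hzero : proj L.zero ∈ L'.endpointsᶜ := fun h =>
    hCC'.notMem_of_mem_left (L.proj_lift_mem _) (L'.endpoints_subset h)
  obtain ⟨W, hW, hlogW⟩ := HasLogOn.exists_mem_nhds
    L'.continuousOn_dipole (hopen.mem_nhds hzero) (L'.dipole_ne_zero hzero)
  have hU : W ∩ L'.endpointsᶜ ∩ {proj L.pole}ᶜ ∈ 𝓝 (proj L.zero) :=
    Filter.inter_mem (Filter.inter_mem hW (hopen.mem_nhds hzero))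
      (isOpen_compl_singleton.mem_nhds L.proj_zero_ne_proj_pole)
  refine not_hasLogOn_dipole_zpow L.proj_zero_ne_proj_pole hk hU
    (((hlog.mono ?_).mul ((hlogW.mono fun x hx => hx.1.1.1).zpow k')).congr fun x hx => ?_)
  · rintro x ⟨⟨⟨-, hx⟩, hpole⟩, hzero⟩
    simp_all [endpoints]
  · exact div_mul_cancel₀ _ (zpow_ne_zero k' (hlogW.ne_zero hx.1.1.1))

end LiftedLoop

theorem not_isPreconnected_compl_union {C C' K : Set Torus} (hC : IsSimpleClosedCurve C)
    (hC' : IsSimpleClosedCurve C') (hCC' : Disjoint C C') (hK : IsClosed K) (hCK : Disjoint C K)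
    (hCK' : Disjoint C' K) : ¬ IsPreconnected (C ∪ C' ∪ K)ᶜ := by
  intro hconn
  obtain ⟨L⟩ := hC.nonempty_liftedLoop
  obtain ⟨L'⟩ := hC'.nonempty_liftedLoop
  obtain ⟨k, k', hkk', hcls⟩ := L.exists_zsmul_cls_eq L' hCC'
  rcases hkk' with hk | hk'
  · exact hk (L.eq_zero_of_hasLogOn_div L' hCC'
      (L.hasLogOn_div_compl_endpoints L' hCC' hK hCK hCK' hconn hcls))
  · exact hk' (L'.eq_zero_of_hasLogOn_div L hCC'.symm
      (L'.hasLogOn_div_compl_endpoints L hCC'.symm hK hCK' hCK (union_comm C C' ▸ hconn) hcls.symm))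

theorem subsingleton_of_isPreconnected_compl_iUnion {ι : Type*} [Finite ι] {C : ι → Set Torus}
    (hC : ∀ i, IsSimpleClosedCurve (C i)) (hdisj : Pairwise fun i j => Disjoint (C i) (C j))
    (hconn : IsPreconnected (⋃ i, C i)ᶜ) : Subsingleton ι := by
  refine ⟨fun i j => by_contra fun hij => ?_⟩
  let K := ⋃ l ∈ ({i, j}ᶜ : Set ι), C l
  have hunion : ⋃ l, C l = C i ∪ C j ∪ K := by
    rw [← biUnion_pair, ← biUnion_union, union_compl_self, biUnion_univ]
  have hK : IsClosed K := (toFinite _).isClosed_biUnion fun l _ => (hC l).isClosed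
  have hdisjK : ∀ m ∈ ({i, j} : Set ι), Disjoint (C m) K := fun m hm =>
    disjoint_iUnion₂_right.2 fun l hl => hdisj fun hml => hl (hml ▸ hm)
  exact not_isPreconnected_compl_union (hC i) (hC j) (hdisj hij) hK (hdisjK i (by simp))
    (hdisjK j (by simp)) (hunion ▸ hconn)

theorem isSimpleClosedCurve_singleton_prod_univ (a : AddCircle (1 : ℝ)) :
    IsSimpleClosedCurve (({a} : Set (AddCircle (1 : ℝ))) ×ˢ (univ : Set (AddCircle (1 : ℝ)))) :=
  nonempty_addCircle_homeomorph_sphere.map fun e =>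
    ((Homeomorph.Set.prod _ _).trans (Homeomorph.uniqueProd _ _)).trans
      ((Homeomorph.Set.univ _).trans e)

theorem isConnected_compl_singleton_prod_univ (a : AddCircle (1 : ℝ)) :
    IsConnected (({a} : Set (AddCircle (1 : ℝ))) ×ˢ (univ : Set (AddCircle (1 : ℝ))))ᶜ := by
  let e := AddCircle.homeomorphCircle (T := 1) one_ne_zero
  have hcircle : IsConnected ({a}ᶜ : Set (AddCircle (1 : ℝ))) := by
    rw [← e.isConnected_image, image_compl_eq e.bijective, image_singleton]
    exact (Circle.isPathConnected_compl_singleton (e a)).isConnected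
  have : (({a} : Set (AddCircle (1 : ℝ))) ×ˢ (univ : Set (AddCircle (1 : ℝ))))ᶜ = {a}ᶜ ×ˢ univ := by
    ext; simp
  exact this ▸ hcircle.prod isConnected_univ

/-- the genus of the torus `T² = (ℝ/ℤ) × (ℝ/ℤ)` is `1`: there is a subset of `T²`
homeomorphic to `S¹` with connected complement, and any two disjoint such subsets together have
disconnected complement. -/
theorem genus_torus_eq_one :
    genus (AddCircle (1 : ℝ) × AddCircle (1 : ℝ)) = 1 ∧
    (∃ C : Set (AddCircle (1 : ℝ) × AddCircle (1 : ℝ)),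
      Nonempty (↥C ≃ₜ ↥(Metric.sphere (0 : EuclideanSpace ℝ (Fin 2)) 1)) ∧
      IsConnected Cᶜ) ∧
    (∀ C₁ C₂ : Set (AddCircle (1 : ℝ) × AddCircle (1 : ℝ)), Disjoint C₁ C₂ →
      Nonempty (↥C₁ ≃ₜ ↥(Metric.sphere (0 : EuclideanSpace ℝ (Fin 2)) 1)) →
      Nonempty (↥C₂ ≃ₜ ↥(Metric.sphere (0 : EuclideanSpace ℝ (Fin 2)) 1)) →
      ¬ IsPreconnected (C₁ ∪ C₂)ᶜ) := by
  let C₀ : Set Torus := {0} ×ˢ univ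
  have hcurve : IsSimpleClosedCurve C₀ := isSimpleClosedCurve_singleton_prod_univ 0
  have hconn : IsConnected C₀ᶜ := isConnected_compl_singleton_prod_univ 0
  refine ⟨IsGreatest.csSup_eq ⟨⟨fun _ => C₀, Subsingleton.pairwise, fun _ => hcurve, ?_⟩, ?_⟩,
    ⟨C₀, hcurve, hconn⟩, fun C₁ C₂ hdisj hC₁ hC₂ => ?_⟩
  · rwa [iUnion_const]
  · rintro m ⟨C, hdisj, hC, hC_conn⟩
    exact Fin.subsingleton_iff_le_one.1
      (subsingleton_of_isPreconnected_compl_iUnion hC hdisj hC_conn.isPreconnected)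
  · simpa using not_isPreconnected_compl_union hC₁ hC₂ hdisj isClosed_empty
      (disjoint_empty _) (disjoint_empty _)
end

section
/- Let n ≥ 1 and let α and β be chord diagrams on 2n points, i.e., fixed-point-free involutions of ℤ/2n. For all starting points s, t ∈ ℤ/2n: the code of α read from s equals the code of β read from t if and only if β = ρ ∘ α ∘ ρ⁻¹, where ρ : ℤ/2n → ℤ/2n is the rotation ρ(x) = x + (t − s). In particular, the code of a chord diagram determines the diagram uniquely up to rotation of the points. -/
namespace ChordDiag

/-- The index of the first point, when traversing `s, s + 1, s + 2, …`, lying on the same chord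
of the chord diagram `α` as the point `s + k`. -/
noncomputable def firstIdx {m : ℕ} (α : Equiv.Perm (ZMod m)) (s : ZMod m) (k : ℕ) : ℕ :=
  Nat.find (show ∃ j : ℕ,
      (s + (j : ZMod m) = s + (k : ZMod m) ∨ s + (j : ZMod m) = α (s + (k : ZMod m))) from
    ⟨k, Or.inl rfl⟩)

/-- The code of the chord diagram `α` read from the starting point `s`: `code α s k` is the label
of the chord containing the point `s + k`, where the chords are labeled `1, 2, 3, …` in the order
of their first appearance along the traversal `s, s + 1, s + 2, …`. -/
noncomputable def code {m : ℕ} (α : Equiv.Perm (ZMod m)) (s : ZMod m) (k : ℕ) : ℕ :=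
  ((Finset.range (firstIdx α s k + 1)).filter (fun j => firstIdx α s j = j)).card

/-! Two points get the same label exactly when they lie on the same chord, because labels increase
strictly with the position at which a chord is first met. Hence the code recovers the partition of
the points into chords, and this partition recovers the diagram: `α x` is the other point of the
chord of `x`, or `x` itself if there is none. Rotating the diagram together with its starting point
does not change the code, so the case of two starting points reduces to that of a single one. -/

section SameChord

variable {X Y : Type*}

/-- The points `x` and `y` lie on the same chord of `α`. This is stated for an arbitrary self-map
`α`, with the disjuncts oriented as in `firstIdx`; it is an equivalence relation when `α` is an
involution, and a fixed point of `α` then counts as a chord with a single point. -/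
def SameChord (α : X → X) (x y : X) : Prop :=
  x = y ∨ x = α y

theorem sameChord_equivalence {α : X → X} (hα : Function.Involutive α) :
    Equivalence (SameChord α) where
  refl _ := Or.inl rfl
  symm := Or.imp Eq.symm fun h => hα.eq_iff.mp h.symm
  trans := by
    rintro x y z (rfl | rfl) (rfl | rfl)
    · exact Or.inl rfl
    · exact Or.inr rfl
    · exact Or.inr rfl
    · exact Or.inl (hα z)

theorem eq_of_sameChord_iff {α β : X → X} (h : ∀ x y, SameChord α x y ↔ SameChord β x y) :
    α = β := by
  funext x
  rcases (h (α x) x).mp (Or.inr rfl) with hα | hαβ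
  · rcases (h (β x) x).mpr (Or.inr rfl) with hβ | hβα
    · exact hα.trans hβ.symm
    · exact hβα.symm
  · exact hαβ

theorem sameChord_permCongr_iff (e : X ≃ Y) (α : Equiv.Perm X) {x y : X} :
    SameChord (e.permCongr α) (e x) (e y) ↔ SameChord α x y := by
  simp [SameChord]

theorem involutive_permCongr (e : X ≃ Y) {α : Equiv.Perm X} (hα : Function.Involutive α) :
    Function.Involutive (e.permCongr α) := fun x => by
  simp [hα (e.symm x)]

end SameChord

section Code

variable {m : ℕ} {α β : Equiv.Perm (ZMod m)} {s t : ZMod m} {k l : ℕ}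

theorem sameChord_firstIdx (α : Equiv.Perm (ZMod m)) (s : ZMod m) (k : ℕ) :
    SameChord α (s + firstIdx α s k) (s + k) := by
  rw [firstIdx]
  generalize_proofs hexists
  exact Nat.find_spec hexists

theorem firstIdx_congr
    (h : ∀ j : ℕ, SameChord α (s + j) (s + k) ↔ SameChord β (t + j) (t + l)) :
    firstIdx α s k = firstIdx β t l :=
  Nat.find_congr' (h _)

theorem firstIdx_eq_firstIdx_iff (hα : Function.Involutive α) :
    firstIdx α s k = firstIdx α s l ↔ SameChord α (s + k) (s + l) := by
  have hequiv := sameChord_equivalence hα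
  constructor
  · intro h
    have hk := sameChord_firstIdx α s k
    rw [h] at hk
    exact hequiv.trans (hequiv.symm hk) (sameChord_firstIdx α s l)
  · intro h
    exact firstIdx_congr fun j =>
      ⟨fun hj => hequiv.trans hj h, fun hj => hequiv.trans hj (hequiv.symm h)⟩

theorem firstIdx_firstIdx (hα : Function.Involutive α) (s : ZMod m) (k : ℕ) :
    firstIdx α s (firstIdx α s k) = firstIdx α s k :=
  (firstIdx_eq_firstIdx_iff hα).mpr (sameChord_firstIdx α s k)

theorem code_lt_code (hα : Function.Involutive α) (h : firstIdx α s k < firstIdx α s l) :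
    code α s k < code α s l := by
  refine Finset.card_lt_card (Finset.ssubset_iff_of_subset ?_ |>.mpr ⟨firstIdx α s l, ?_, ?_⟩)
  · exact Finset.filter_subset_filter _ (Finset.range_mono (by omega))
  · simp [firstIdx_firstIdx hα]
  · simp [h]

theorem code_eq_code_iff (hα : Function.Involutive α) :
    code α s k = code α s l ↔ SameChord α (s + k) (s + l) := by
  rw [← firstIdx_eq_firstIdx_iff hα]
  constructor
  · intro h
    by_contra hne
    rcases Nat.lt_or_gt_of_ne hne with hlt | hgt
    · exact (code_lt_code hα hlt).ne h
    · exact (code_lt_code hα hgt).ne' h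
  · intro h
    simp only [code, h]

theorem code_permCongr_addRight (α : Equiv.Perm (ZMod m)) (s c : ZMod m) :
    code ((Equiv.addRight c).permCongr α) (s + c) = code α s := by
  have hfirst (k : ℕ) :
      firstIdx ((Equiv.addRight c).permCongr α) (s + c) k = firstIdx α s k :=
    firstIdx_congr fun j => by
      rw [add_right_comm s c, add_right_comm s c]
      exact sameChord_permCongr_iff (Equiv.addRight c) α
  funext k
  simp only [code, hfirst]

theorem exists_lt_add_natCast_eq [NeZero m] (s x : ZMod m) : ∃ k < m, s + (k : ZMod m) = x :=
  ⟨(x - s).val, ZMod.val_lt _, by simp⟩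

theorem eq_of_code_eq [NeZero m] (hα : Function.Involutive α) (hβ : Function.Involutive β)
    (h : ∀ k < m, code α s k = code β s k) : α = β := by
  refine DFunLike.coe_injective (eq_of_sameChord_iff fun x y => ?_)
  obtain ⟨k, hk, rfl⟩ := exists_lt_add_natCast_eq s x
  obtain ⟨l, hl, rfl⟩ := exists_lt_add_natCast_eq s y
  rw [← code_eq_code_iff hα, ← code_eq_code_iff hβ, h k hk, h l hl]

theorem code_eq_iff_rotation_general [NeZero m] (hα : Function.Involutive α)
    (hβ : Function.Involutive β) (s t : ZMod m) :
    (∀ k < m, code α s k = code β t k) ↔ β = (Equiv.addRight (t - s)).permCongr α := by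
  have hcode : code ((Equiv.addRight (t - s)).permCongr α) t = code α s := by
    simpa only [add_sub_cancel] using code_permCongr_addRight α s (t - s)
  rw [← hcode]
  constructor
  · intro h
    exact (eq_of_code_eq (involutive_permCongr _ hα) hβ h).symm
  · rintro rfl k -
    rfl

end Code

/-- for chord diagrams `α`, `β` on `2n` points (fixed-point-free involutions of
`ℤ/2n`) and starting points `s`, `t`, the code of `α` read from `s` equals the code of `β` read
from `t` iff `β = ρ ∘ α ∘ ρ⁻¹` where `ρ` is the rotation `x ↦ x + (t - s)`. -/
theorem code_eq_iff_rotation (n : ℕ) (hn : 1 ≤ n) (α β : Equiv.Perm (ZMod (2 * n)))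
    (hαinv : Function.Involutive α) (hαfree : ∀ x, α x ≠ x)
    (hβinv : Function.Involutive β) (hβfree : ∀ x, β x ≠ x)
    (s t : ZMod (2 * n)) :
    (∀ k < 2 * n, code α s k = code β t k) ↔
      β = (Equiv.addRight (t - s)).symm.trans ((α : Equiv.Perm (ZMod (2 * n))).trans
        (Equiv.addRight (t - s))) := by
  have : NeZero (2 * n) := ⟨by omega⟩
  exact code_eq_iff_rotation_general hαinv hβinv s t

end ChordDiag
end
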